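/- For all L>0 and all R>0, E(L) ≤ e_gs(L;R)/R. -/

import Mathlib

open MeasureTheory Real Set Filter Topology

noncomputable section

/-- The open square `Q_r = (-r/2, r/2) × (-r/2, r/2)`. -/
def Qsq (r : ℝ) : Set (ℝ × ℝ) := Ioo (-r/2) (r/2) ×ˢ Ioo (-r/2) (r/2)

/-- The vertical strip `S_R = (-R/2, R/2) × ℝ`. -/
def Strip (R : ℝ) : Set (ℝ × ℝ) := Ioo (-R/2) (R/2) ×ˢ (univ : Set ℝ)

/-- The magnetic potential `A₀(x) = (-x₂/2, x₁/2)` of the constant unit magnetic field. -/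
def A₀ (x : ℝ × ℝ) : ℝ × ℝ := (-x.2 / 2, x.1 / 2)

/-- The magnetic potential `A_van(x) = (-x₂²/2, 0)` generating the field `B(x) = x₂`. -/
def Avan (x : ℝ × ℝ) : ℝ × ℝ := (-x.2 ^ 2 / 2, 0)

/-- The magnetic gradient energy density `|(∇ - iA)u|²` at `x`. -/
def magGradSq (A : ℝ × ℝ → ℝ × ℝ) (u : ℝ × ℝ → ℂ) (x : ℝ × ℝ) : ℝ :=
  ‖fderiv ℝ u x (1, 0) - Complex.I * ((A x).1 : ℂ) * u x‖ ^ 2 +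
  ‖fderiv ℝ u x (0, 1) - Complex.I * ((A x).2 : ℂ) * u x‖ ^ 2

/-- The Ginzburg–Landau functional `F_{b,Q_r}` on the square `Q_r`. -/
def Fsq (b r : ℝ) (u : ℝ × ℝ → ℂ) : ℝ :=
  ∫ x in Qsq r, (b * magGradSq A₀ u x - ‖u x‖ ^ 2 + ‖u x‖ ^ 4 / 2)

/-- (Smooth surrogate of) membership in `H¹(Q_r; ℂ)`. -/
def MemH1sq (u : ℝ × ℝ → ℂ) : Prop := ContDiff ℝ 1 u

/-- (Smooth surrogate of) membership in `H¹₀(Q_r; ℂ)`: vanishing on the boundary. -/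
def MemH10sq (r : ℝ) (u : ℝ × ℝ → ℂ) : Prop :=
  ContDiff ℝ 1 u ∧ ∀ x ∈ frontier (Qsq r), u x = 0

/-- The Dirichlet ground-state energy `e_D(b, r)`. -/
def eD (b r : ℝ) : ℝ := sInf (Fsq b r '' {u | MemH10sq r u})

/-- The Neumann ground-state energy `e_N(b, r)`. -/
def eN (b r : ℝ) : ℝ := sInf (Fsq b r '' {u | MemH1sq u})

/-- The energy density of the strip functional `𝓔_{L,R}` at `x`. -/
def stripDensity (L : ℝ) (u : ℝ × ℝ → ℂ) (x : ℝ × ℝ) : ℝ :=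
  magGradSq Avan u x - L ^ (-(2:ℝ)/3) * ‖u x‖ ^ 2 + (L ^ (-(2:ℝ)/3) / 2) * ‖u x‖ ^ 4

/-- The strip functional `𝓔_{L,R}`. -/
def Estrip (L R : ℝ) (u : ℝ × ℝ → ℂ) : ℝ := ∫ x in Strip R, stripDensity L u x

/-- (Surrogate of) membership in the space `H¹_{mag,0}(S_R)`. -/
def MemH1mag0 (R : ℝ) (u : ℝ × ℝ → ℂ) : Prop :=
  ContDiff ℝ 1 u ∧
  IntegrableOn (fun x => ‖u x‖ ^ 2) (Strip R) ∧
  IntegrableOn (magGradSq Avan u) (Strip R) ∧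
  IntegrableOn (fun x => ‖u x‖ ^ 4) (Strip R) ∧
  ∀ x ∈ frontier (Strip R), u x = 0

/-- The ground-state energy `e_gs(L; R)` of the strip functional. -/
def egs (L R : ℝ) : ℝ := sInf (Estrip L R '' {u | MemH1mag0 R u})

/-- `g : (0,∞) → ℝ` is the thermodynamic limit of the Dirichlet square energies. -/
def IsLimitG (g : ℝ → ℝ) : Prop :=
  ∀ b > 0, Tendsto (fun r => eD b r / r ^ 2) atTop (nhds (g b))

/-- `E : (0,∞) → ℝ` is the large-`R` limit of the strip energies. -/
def IsLimitE (E : ℝ → ℝ) : Prop :=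
  ∀ L > 0, Tendsto (fun R => egs L R / R) atTop (nhds (E L))

/-!
The energy of the strip is subadditive in its width, `e_gs(L; R + R') ≤ e_gs(L; R) + e_gs(L; R')`:
test functions on adjacent strips are translated, which leaves the energy invariant because `A_van`
depends only on `x₂`, and added up. Hence `e_gs(L; nR) / (nR) ≤ e_gs(L; R) / R`, and `n → ∞` gives
the claim.

The infimum is not a junk value: the commutator `[∂₁ - iA₁, ∂₂ - iA₂] = -i x₂`, tested against
`arctan x₂ · |u|²`, bounds `∫ x₂ arctan x₂ |u|²` by `∫ 3 |(∇ - iA)u|² + |u|²`, so that the negative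
term `-L^{-2/3} |u|²` can only matter in a compact part of the strip, where the quartic term
controls it.

Functions that merely vanish on the boundary are approximated in energy by compactly supported ones:
composing `u` with a radial map of `ℂ` that is `0` near `0` and the identity away from `0` makes `u`
vanish near its zeros, hence near the boundary, without any quantitative information on the decay
of `u` there. As this map commutes with phase rotations, it increases the magnetic gradient by at
most a bounded factor, and the approximation follows by dominated convergence.
-/

/-! ### Integration by parts -/

section Calculus

variable {E F G W : Type*} [NormedAddCommGroup E] [NormedSpace ℝ E]
  [NormedAddCommGroup F] [NormedSpace ℝ F] [NormedAddCommGroup G] [NormedSpace ℝ G]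
  [NormedAddCommGroup W] [NormedSpace ℝ W]

lemma continuous_fderiv_apply_const {f : E → F} (hf : ContDiff ℝ 1 f) (v : E) :
    Continuous fun x => fderiv ℝ f x v :=
  (hf.continuous_fderiv one_ne_zero).clm_apply continuous_const

variable [FiniteDimensional ℝ E] [MeasurableSpace E] [BorelSpace E] {μ : Measure E}
  [μ.IsAddHaarMeasure]

open scoped Convolution

lemma fderiv_convolution_right_apply (B : F →L[ℝ] G →L[ℝ] W) {f : E → F} {g : E → G}
    (hf : LocallyIntegrable f μ) (hg : ContDiff ℝ 1 g) (hgs : HasCompactSupport g) (x v : E) :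
    fderiv ℝ (f ⋆[B, μ] g) x v = (f ⋆[B, μ] fun y => fderiv ℝ g y v) x := by
  rw [(hgs.hasFDerivAt_convolution_right B hf hg x).fderiv]
  exact convolution_precompR_apply B hf (hgs.fderiv ℝ) (hg.continuous_fderiv one_ne_zero) x v

lemma fderiv_convolution_left_apply (B : F →L[ℝ] G →L[ℝ] W) {f : E → F} {g : E → G}
    (hf : ContDiff ℝ 1 f) (hfs : HasCompactSupport f) (hg : LocallyIntegrable g μ) (x v : E) :
    fderiv ℝ (f ⋆[B, μ] g) x v = ((fun y => fderiv ℝ f y v) ⋆[B, μ] g) x := by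
  rw [← convolution_flip, fderiv_convolution_right_apply B.flip hg hf hfs, convolution_flip]

lemma convolution_fderiv_fderiv_comm (B : F →L[ℝ] G →L[ℝ] W) {f : E → F} {g : E → G}
    (hf : ContDiff ℝ 1 f) (hfs : HasCompactSupport f)
    (hg : ContDiff ℝ 1 g) (hgs : HasCompactSupport g) (v w : E) :
    (fun y => fderiv ℝ f y v) ⋆[B, μ] (fun y => fderiv ℝ g y w) =
      (fun y => fderiv ℝ f y w) ⋆[B, μ] (fun y => fderiv ℝ g y v) := by
  have move_derivative : f ⋆[B, μ] (fun y => fderiv ℝ g y w) =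
      (fun y => fderiv ℝ f y w) ⋆[B, μ] g := by
    ext x
    rw [← fderiv_convolution_right_apply B hf.continuous.locallyIntegrable hg hgs,
      ← fderiv_convolution_left_apply B hf hfs hg.continuous.locallyIntegrable]
  ext x
  rw [← fderiv_convolution_left_apply B hf hfs
      (continuous_fderiv_apply_const hg w).locallyIntegrable, move_derivative,
    fderiv_convolution_right_apply B (continuous_fderiv_apply_const hf w).locallyIntegrable hg hgs]

lemma integral_bilin_fderiv_fderiv_comm (B : F →L[ℝ] G →L[ℝ] W) {f : E → F} {g : E → G}
    (hf : ContDiff ℝ 1 f) (hfs : HasCompactSupport f)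
    (hg : ContDiff ℝ 1 g) (hgs : HasCompactSupport g) (v w : E) :
    ∫ x, B (fderiv ℝ f x v) (fderiv ℝ g x w) ∂μ =
      ∫ x, B (fderiv ℝ f x w) (fderiv ℝ g x v) ∂μ := by
  have fderiv_reflection (x u : E) : fderiv ℝ (fun y => g (-y)) x u = -fderiv ℝ g (-x) u := by
    simpa using congrArg (· u) (fderiv_comp_smul (f := g) (-1 : ℝ) (x := x))
  have h := congrFun (convolution_fderiv_fderiv_comm (μ := μ) B hf hfs (hg.comp contDiff_neg)
    (hgs.comp_homeomorph (Homeomorph.neg E)) v w) 0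
  simpa only [convolution, Function.comp_def, fderiv_reflection, zero_sub, neg_neg, map_neg,
    integral_neg, neg_inj] using h

lemma integral_mul_fderiv_eq_neg {f g : E → ℝ} (hf : ContDiff ℝ 1 f) (hg : ContDiff ℝ 1 g)
    (hgs : HasCompactSupport g) (v : E) :
    ∫ x, f x * fderiv ℝ g x v ∂μ = -∫ x, fderiv ℝ f x v * g x ∂μ := by
  have hf' := continuous_fderiv_apply_const hf v
  have hg' := continuous_fderiv_apply_const hg v
  exact integral_mul_fderiv_eq_neg_fderiv_mul_of_integrable
    ((hf'.mul hg.continuous).integrable_of_hasCompactSupport hgs.mul_left)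
    ((hf.continuous.mul hg').integrable_of_hasCompactSupport (hgs.fderiv_apply ℝ v).mul_left)
    ((hf.continuous.mul hg.continuous).integrable_of_hasCompactSupport hgs.mul_left)
    (fun x _ => hf.differentiable one_ne_zero x) (fun x _ => hg.differentiable one_ne_zero x)

end Calculus

section Integrability

variable {X F : Type*} [TopologicalSpace X] [MeasurableSpace X] [OpensMeasurableSpace X]
  {μ : Measure X} [IsFiniteMeasureOnCompacts μ] [NormedAddCommGroup F] {u : X → F} {n : ℕ}

lemma integrable_mul_norm_pow {f : X → ℝ} (hf : Continuous f) (hu : Continuous u)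
    (hus : HasCompactSupport u) (hn : n ≠ 0) : Integrable (fun x => f x * ‖u x‖ ^ n) μ :=
  (hf.mul (hu.norm.pow n)).integrable_of_hasCompactSupport
    (hus.comp_left (g := fun z => ‖z‖ ^ n) (by simp [hn])).mul_left

lemma integrable_norm_pow (hu : Continuous u) (hus : HasCompactSupport u) (hn : n ≠ 0) :
    Integrable (fun x => ‖u x‖ ^ n) μ := by
  simpa only [one_mul] using
    integrable_mul_norm_pow (f := fun _ => 1) continuous_const hu hus hn

end Integrability

/-! ### The magnetic gradient -/

/-- The first component `∂₁u - iA₁u` of the magnetic gradient `(∇ - iA)u`. -/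
def magDeriv₁ (A : ℝ × ℝ → ℝ × ℝ) (u : ℝ × ℝ → ℂ) (x : ℝ × ℝ) : ℂ :=
  fderiv ℝ u x (1, 0) - Complex.I * ((A x).1 : ℂ) * u x

/-- The second component `∂₂u - iA₂u` of the magnetic gradient `(∇ - iA)u`. -/
def magDeriv₂ (A : ℝ × ℝ → ℝ × ℝ) (u : ℝ × ℝ → ℂ) (x : ℝ × ℝ) : ℂ :=
  fderiv ℝ u x (0, 1) - Complex.I * ((A x).2 : ℂ) * u x

lemma magGradSq_eq (A : ℝ × ℝ → ℝ × ℝ) (u : ℝ × ℝ → ℂ) (x : ℝ × ℝ) :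
    magGradSq A u x = ‖magDeriv₁ A u x‖ ^ 2 + ‖magDeriv₂ A u x‖ ^ 2 := rfl

lemma magGradSq_nonneg (A : ℝ × ℝ → ℝ × ℝ) (u : ℝ × ℝ → ℂ) (x : ℝ × ℝ) :
    0 ≤ magGradSq A u x := by
  unfold magGradSq
  positivity

lemma magGradSq_congr (A : ℝ × ℝ → ℝ × ℝ) {u v : ℝ × ℝ → ℂ} {x : ℝ × ℝ} (h : u =ᶠ[𝓝 x] v) :
    magGradSq A u x = magGradSq A v x := by
  simp only [magGradSq, h.fderiv_eq, h.eq_of_nhds]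

lemma magGradSq_of_notMem_tsupport (A : ℝ × ℝ → ℝ × ℝ) {u : ℝ × ℝ → ℂ} {x : ℝ × ℝ}
    (h : x ∉ tsupport u) : magGradSq A u x = 0 := by
  simp [magGradSq, fderiv_of_notMem_tsupport (𝕜 := ℝ) h, image_eq_zero_of_notMem_tsupport h]

lemma continuous_magDeriv₁ {A : ℝ × ℝ → ℝ × ℝ} (hA : Continuous A) {u : ℝ × ℝ → ℂ}
    (hu : ContDiff ℝ 1 u) : Continuous (magDeriv₁ A u) :=
  (continuous_fderiv_apply_const hu _).sub <|
    (continuous_const.mul (Complex.continuous_ofReal.comp hA.fst)).mul hu.continuous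

lemma continuous_magDeriv₂ {A : ℝ × ℝ → ℝ × ℝ} (hA : Continuous A) {u : ℝ × ℝ → ℂ}
    (hu : ContDiff ℝ 1 u) : Continuous (magDeriv₂ A u) :=
  (continuous_fderiv_apply_const hu _).sub <|
    (continuous_const.mul (Complex.continuous_ofReal.comp hA.snd)).mul hu.continuous

lemma continuous_magGradSq {A : ℝ × ℝ → ℝ × ℝ} (hA : Continuous A) {u : ℝ × ℝ → ℂ}
    (hu : ContDiff ℝ 1 u) : Continuous (magGradSq A u) :=
  ((continuous_magDeriv₁ hA hu).norm.pow 2).add ((continuous_magDeriv₂ hA hu).norm.pow 2)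

lemma integrable_magGradSq {A : ℝ × ℝ → ℝ × ℝ} (hA : Continuous A) {u : ℝ × ℝ → ℂ}
    (hu : ContDiff ℝ 1 u) (hus : HasCompactSupport u) : Integrable (magGradSq A u) :=
  (continuous_magGradSq hA hu).integrable_of_hasCompactSupport <|
    HasCompactSupport.intro hus.isCompact fun _ => magGradSq_of_notMem_tsupport A

/-- The magnetic field `∂₁A₂ - ∂₂A₁` of the potential `A`. -/
def magCurl (A : ℝ × ℝ → ℝ × ℝ) (x : ℝ × ℝ) : ℝ :=
  (fderiv ℝ A x (1, 0)).2 - (fderiv ℝ A x (0, 1)).1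

attribute [local instance] Complex.finrank_real_complex_fact

local notation "ω" => Complex.orientation.areaForm'

lemma abs_areaForm_le (z w : ℂ) : |ω z w| ≤ ‖z‖ * ‖w‖ :=
  Complex.orientation.abs_areaForm_le z w

lemma integral_magCurl_mul {A : ℝ × ℝ → ℝ × ℝ} {ρ : ℝ × ℝ → ℝ} (hA : ContDiff ℝ 1 A)
    (hρ : ContDiff ℝ 1 ρ) (hρs : HasCompactSupport ρ) :
    ∫ x, magCurl A x * ρ x =
      ∫ x, ((A x).1 * fderiv ℝ ρ x (0, 1) - (A x).2 * fderiv ℝ ρ x (1, 0)) := by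
  have fderiv_fst_A (x v) : fderiv ℝ (fun y => (A y).1) x v = (fderiv ℝ A x v).1 := by
    rw [fderiv.fst (hA.differentiable one_ne_zero x)]; rfl
  have fderiv_snd_A (x v) : fderiv ℝ (fun y => (A y).2) x v = (fderiv ℝ A x v).2 := by
    rw [fderiv.snd (hA.differentiable one_ne_zero x)]; rfl
  have by_parts₁ := integral_mul_fderiv_eq_neg (μ := volume) hA.fst hρ hρs (0, 1)
  have by_parts₂ := integral_mul_fderiv_eq_neg (μ := volume) hA.snd hρ hρs (1, 0)
  simp only [fderiv_fst_A, fderiv_snd_A] at by_parts₁ by_parts₂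
  have integrable_mul {f : ℝ × ℝ → ℝ} (hf : Continuous f) : Integrable fun x => f x * ρ x :=
    (hf.mul hρ.continuous).integrable_of_hasCompactSupport hρs.mul_left
  have integrable_mul_fderiv {f : ℝ × ℝ → ℝ} (hf : Continuous f) (v : ℝ × ℝ) :
      Integrable fun x => f x * fderiv ℝ ρ x v :=
    (hf.mul (continuous_fderiv_apply_const hρ v)).integrable_of_hasCompactSupport
      (hρs.fderiv_apply ℝ v).mul_left
  simp only [magCurl, sub_mul]
  rw [integral_sub (integrable_mul (continuous_fderiv_apply_const hA _).snd)
      (integrable_mul (continuous_fderiv_apply_const hA _).fst),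
    integral_sub (integrable_mul_fderiv hA.continuous.fst _)
      (integrable_mul_fderiv hA.continuous.snd _), by_parts₁, by_parts₂]
  ring

lemma fderiv_mul_norm_sq_apply {φ : ℝ × ℝ → ℝ} {u : ℝ × ℝ → ℂ} {x : ℝ × ℝ}
    (hφ : DifferentiableAt ℝ φ x) (hu : DifferentiableAt ℝ u x) (v : ℝ × ℝ) :
    fderiv ℝ (fun y => φ y * ‖u y‖ ^ 2) x v =
      φ x * (2 * inner ℝ (u x) (fderiv ℝ u x v)) + ‖u x‖ ^ 2 * fderiv ℝ φ x v := by
  have h : HasFDerivAt (fun y => φ y * ‖u y‖ ^ 2) _ x := hφ.hasFDerivAt.mul hu.hasFDerivAt.norm_sq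
  rw [h.fderiv]
  simp only [add_apply, smul_apply, smul_eq_mul,
    ContinuousLinearMap.comp_apply, innerSL_apply_apply, nsmul_eq_mul, Nat.cast_ofNat]

lemma areaForm_magDeriv_eq (A : ℝ × ℝ → ℝ × ℝ) {φ : ℝ × ℝ → ℝ} {u : ℝ × ℝ → ℂ} {x : ℝ × ℝ}
    (hφ : DifferentiableAt ℝ φ x) (hu : DifferentiableAt ℝ u x) :
    2 * φ x * ω (magDeriv₁ A u x) (magDeriv₂ A u x)
        + fderiv ℝ φ x (0, 1) * ω (magDeriv₁ A u x) (u x)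
        - fderiv ℝ φ x (1, 0) * ω (magDeriv₂ A u x) (u x) =
      (ω (fderiv ℝ u x (1, 0)) (fderiv ℝ (φ • u) x (0, 1))
        - ω (fderiv ℝ u x (0, 1)) (fderiv ℝ (φ • u) x (1, 0)))
      + ((A x).1 * fderiv ℝ (fun y => φ y * ‖u y‖ ^ 2) x (0, 1)
        - (A x).2 * fderiv ℝ (fun y => φ y * ‖u y‖ ^ 2) x (1, 0)) := by
  rw [fderiv_mul_norm_sq_apply hφ hu, fderiv_mul_norm_sq_apply hφ hu, fderiv_smul hφ hu]
  simp only [magDeriv₁, Orientation.areaForm'_apply, map_sub, magDeriv₂, sub_apply,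
    LinearMap.coe_toContinuousLinearMap', Complex.areaForm, Complex.mul_im, Complex.conj_re,
    Complex.mul_re, Complex.I_re, Complex.ofReal_re, zero_mul, Complex.I_im,
    Complex.ofReal_im, mul_zero, sub_self, one_mul, zero_add, Complex.conj_im, zero_sub,
    sub_neg_eq_add, neg_mul, map_mul, Complex.conj_I, Complex.conj_ofReal, Complex.neg_im,
    mul_neg, neg_zero, neg_add_rev, add_apply, smul_apply, Complex.real_smul,
    ContinuousLinearMap.smulRight_apply, Complex.add_im, add_zero, Complex.add_re, sub_zero,
    Complex.inner, Complex.sq_norm, Complex.normSq_apply]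
  ring

-- This is `[∂₁ - iA₁, ∂₂ - iA₂] = -i curl A` paired with `φ |u|²`.
lemma integral_weight_mul_magCurl_mul_norm_sq {A : ℝ × ℝ → ℝ × ℝ} {φ : ℝ × ℝ → ℝ}
    {u : ℝ × ℝ → ℂ} (hA : ContDiff ℝ 1 A) (hφ : ContDiff ℝ 1 φ) (hu : ContDiff ℝ 1 u)
    (hus : HasCompactSupport u) :
    ∫ x, φ x * magCurl A x * ‖u x‖ ^ 2 =
      ∫ x, (2 * φ x * ω (magDeriv₁ A u x) (magDeriv₂ A u x)
        + fderiv ℝ φ x (0, 1) * ω (magDeriv₁ A u x) (u x)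
        - fderiv ℝ φ x (1, 0) * ω (magDeriv₂ A u x) (u x)) := by
  have hφu : ContDiff ℝ 1 (φ • u) := hφ.smul hu
  have hφus : HasCompactSupport (φ • u) := hus.smul_left
  have hρ : ContDiff ℝ 1 fun x => φ x * ‖u x‖ ^ 2 := hφ.mul (hu.norm_sq ℝ)
  have hρs : HasCompactSupport fun x => φ x * ‖u x‖ ^ 2 :=
    (hus.comp_left (g := fun z => ‖z‖ ^ 2) (by simp)).mul_left
  have integrable_areaForm (v w) :
      Integrable fun x => ω (fderiv ℝ u x v) (fderiv ℝ (φ • u) x w) := by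
    refine Continuous.integrable_of_hasCompactSupport ?_ ?_
    · have := continuous_fderiv_apply_const hu v
      have := continuous_fderiv_apply_const hφu w
      fun_prop
    · exact HasCompactSupport.intro hus.isCompact fun x hx => by
        simp [fderiv_of_notMem_tsupport (𝕜 := ℝ) hx]
  have integrable_potential (v) {f : ℝ × ℝ → ℝ} (hf : Continuous f) :
      Integrable fun x => f x * fderiv ℝ (fun y => φ y * ‖u y‖ ^ 2) x v :=
    (hf.mul (continuous_fderiv_apply_const hρ v)).integrable_of_hasCompactSupport
      (hρs.fderiv_apply ℝ v).mul_left
  simp only [fun x => areaForm_magDeriv_eq A (hφ.differentiable one_ne_zero x)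
    (hu.differentiable one_ne_zero x)]
  have integrable_bracket := (integrable_areaForm (1, 0) (0, 1)).sub
    (integrable_areaForm (0, 1) (1, 0))
  have integrable_curl := (integrable_potential (0, 1) hA.continuous.fst).sub
    (integrable_potential (1, 0) hA.continuous.snd)
  rw [integral_add (by exact integrable_bracket) (by exact integrable_curl),
    integral_sub (integrable_areaForm _ _) (integrable_areaForm _ _),
    integral_bilin_fderiv_fderiv_comm _ hu hus hφu hφus (1, 0) (0, 1), sub_self, zero_add,
    ← integral_magCurl_mul hA hρ hρs]
  congr with x
  ring

/-! ### Confinement by the magnetic field -/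

lemma contDiff_Avan : ContDiff ℝ 1 Avan := by
  unfold Avan
  fun_prop

lemma magCurl_Avan (x : ℝ × ℝ) : magCurl Avan x = x.2 := by
  have h₁ : HasDerivAt (fun t : ℝ => -t ^ 2 / 2) (-x.2) x.2 := by
    simpa [neg_div] using (hasDerivAt_pow 2 x.2).fun_neg.div_const 2
  have h : HasFDerivAt Avan ((-x.2 • ContinuousLinearMap.snd ℝ ℝ ℝ).prod 0) x :=
    (h₁.comp_hasFDerivAt x hasFDerivAt_snd).prodMk (hasFDerivAt_const 0 x)
  simp [magCurl, h.fderiv]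

lemma abs_arctan_le_two (t : ℝ) : |arctan t| ≤ 2 := by
  rw [abs_le]
  constructor <;> linarith [arctan_lt_pi_div_two t, neg_pi_div_two_lt_arctan t, pi_lt_four]

lemma mul_arctan_eq_abs (t : ℝ) : t * arctan t = |t| * arctan |t| := by
  rcases abs_choice t with h | h <;> simp [h]

lemma mul_arctan_nonneg (t : ℝ) : 0 ≤ t * arctan t := by
  rw [mul_arctan_eq_abs]
  exact mul_nonneg (abs_nonneg t) (arctan_nonneg.2 (abs_nonneg t))

lemma half_abs_le_mul_arctan {t : ℝ} (ht : 1 ≤ |t|) : |t| / 2 ≤ t * arctan t := by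
  have half_le_arctan : 1 / 2 ≤ arctan |t| := by
    have := arctan_mono ht
    rw [arctan_one] at this
    linarith [pi_gt_three]
  rw [mul_arctan_eq_abs, div_eq_mul_one_div]
  gcongr

lemma fderiv_arctan_snd_apply (x v : ℝ × ℝ) :
    fderiv ℝ (fun y : ℝ × ℝ => arctan y.2) x v = v.2 / (1 + x.2 ^ 2) := by
  rw [(hasFDerivAt_snd (𝕜 := ℝ) (p := x)).arctan.fderiv]
  simp [div_eq_inv_mul]

lemma arctan_weight_integrand_le (A : ℝ × ℝ → ℝ × ℝ) (u : ℝ × ℝ → ℂ) (x : ℝ × ℝ) :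
    2 * arctan x.2 * ω (magDeriv₁ A u x) (magDeriv₂ A u x)
      + 1 / (1 + x.2 ^ 2) * ω (magDeriv₁ A u x) (u x) ≤ 3 * magGradSq A u x + ‖u x‖ ^ 2 := by
  have bulk : 2 * arctan x.2 * ω (magDeriv₁ A u x) (magDeriv₂ A u x) ≤
      2 * 2 * (‖magDeriv₁ A u x‖ * ‖magDeriv₂ A u x‖) := by
    refine (le_abs_self _).trans ?_
    rw [abs_mul, abs_mul, abs_two]
    gcongr
    exacts [abs_arctan_le_two _, abs_areaForm_le _ _]
  have derivative : 1 / (1 + x.2 ^ 2) * ω (magDeriv₁ A u x) (u x) ≤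
      1 * (‖magDeriv₁ A u x‖ * ‖u x‖) := by
    refine (le_abs_self _).trans ?_
    rw [abs_mul, abs_of_nonneg (by positivity)]
    gcongr
    exacts [div_le_one_of_le₀ (by linarith [sq_nonneg x.2]) (by positivity), abs_areaForm_le _ _]
  rw [magGradSq_eq]
  linarith [two_mul_le_add_sq ‖magDeriv₁ A u x‖ ‖magDeriv₂ A u x‖,
    two_mul_le_add_sq ‖magDeriv₁ A u x‖ ‖u x‖, sq_nonneg ‖magDeriv₂ A u x‖, sq_nonneg ‖u x‖,
    sq_nonneg ‖magDeriv₁ A u x‖]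

lemma integral_mul_arctan_mul_norm_sq_le {u : ℝ × ℝ → ℂ} (hu : ContDiff ℝ 1 u)
    (hus : HasCompactSupport u) :
    ∫ x, x.2 * arctan x.2 * ‖u x‖ ^ 2 ≤ ∫ x, (3 * magGradSq Avan u x + ‖u x‖ ^ 2) := by
  have hD₁ := continuous_magDeriv₁ contDiff_Avan.continuous hu
  have hD₂ := continuous_magDeriv₂ contDiff_Avan.continuous hu
  have huc := hu.continuous
  have commutator := integral_weight_mul_magCurl_mul_norm_sq (φ := fun x => arctan x.2)
    contDiff_Avan (contDiff_arctan.comp contDiff_snd) hu hus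
  simp only [magCurl_Avan, fderiv_arctan_snd_apply, zero_div, zero_mul, sub_zero] at commutator
  simp only [mul_comm _ (arctan _)]
  rw [commutator]
  refine integral_mono ?_ ?_ fun x => arctan_weight_integrand_le Avan u x
  · refine Continuous.integrable_of_hasCompactSupport ?_ ?_
    · have : ∀ x : ℝ × ℝ, 1 + x.2 ^ 2 ≠ 0 := fun x => by positivity
      fun_prop (disch := assumption)
    · exact HasCompactSupport.intro hus.isCompact fun x hx => by
        simp [magDeriv₁, magDeriv₂, fderiv_of_notMem_tsupport (𝕜 := ℝ) hx,
          image_eq_zero_of_notMem_tsupport hx]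
  · exact ((integrable_magGradSq contDiff_Avan.continuous hu hus).const_mul 3).add
      (integrable_norm_pow huc hus two_ne_zero)

/-! ### Compactly supported test functions of a strip -/

section StripDensity

variable (L : ℝ) {u v : ℝ × ℝ → ℂ} {x : ℝ × ℝ}

lemma stripDensity_congr (h : u =ᶠ[𝓝 x] v) : stripDensity L u x = stripDensity L v x := by
  simp only [stripDensity, magGradSq_congr Avan h, h.eq_of_nhds]

lemma stripDensity_of_notMem_tsupport (h : x ∉ tsupport u) : stripDensity L u x = 0 := by
  simp [stripDensity, magGradSq_of_notMem_tsupport Avan h, image_eq_zero_of_notMem_tsupport h]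

lemma continuous_stripDensity (hu : ContDiff ℝ 1 u) : Continuous (stripDensity L u) :=
  ((continuous_magGradSq contDiff_Avan.continuous hu).sub
    (continuous_const.mul (hu.continuous.norm.pow 2))).add
    (continuous_const.mul (hu.continuous.norm.pow 4))

lemma integrable_stripDensity (hu : ContDiff ℝ 1 u) (hus : HasCompactSupport u) :
    Integrable (stripDensity L u) :=
  (continuous_stripDensity L hu).integrable_of_hasCompactSupport <|
    HasCompactSupport.intro hus.isCompact fun _ => stripDensity_of_notMem_tsupport L

end StripDensity

lemma isOpen_Strip (R : ℝ) : IsOpen (Strip R) := isOpen_Ioo.prod isOpen_univ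

/-- Test functions of the strip `(a, b) × ℝ`: the compactly supported `C¹` functions, over which
the infimum defining `egs` may be taken. -/
structure IsStripTest (a b : ℝ) (v : ℝ × ℝ → ℂ) : Prop where
  contDiff : ContDiff ℝ 1 v
  hasCompactSupport : HasCompactSupport v
  tsupport_subset : tsupport v ⊆ Ioo a b ×ˢ univ

/-- The strip energy integrated over all of `ℝ²`, which makes it invariant under translation in
`x₁` and additive for functions with disjoint supports. -/
def planeEnergy (L : ℝ) (v : ℝ × ℝ → ℂ) : ℝ := ∫ x, stripDensity L v x

namespace IsStripTest

variable {a b : ℝ} {v : ℝ × ℝ → ℂ}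

lemma memH1mag0 {R : ℝ} (hv : IsStripTest (-R / 2) (R / 2) v) : MemH1mag0 R v := by
  have hvc := hv.contDiff.continuous
  refine ⟨hv.contDiff, (integrable_norm_pow hvc hv.hasCompactSupport two_ne_zero).integrableOn,
    (integrable_magGradSq contDiff_Avan.continuous hv.contDiff hv.hasCompactSupport).integrableOn,
    (integrable_norm_pow hvc hv.hasCompactSupport four_ne_zero).integrableOn, fun x hx => ?_⟩
  refine image_eq_zero_of_notMem_tsupport fun hxv => hx.2 ?_
  rw [(isOpen_Strip R).interior_eq]
  exact hv.tsupport_subset hxv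

lemma Estrip_eq_planeEnergy {R : ℝ} (hv : IsStripTest (-R / 2) (R / 2) v) (L : ℝ) :
    Estrip L R v = planeEnergy L v :=
  setIntegral_eq_integral_of_forall_compl_eq_zero fun _ hx =>
    stripDensity_of_notMem_tsupport L fun hxv => hx (hv.tsupport_subset hxv)

lemma translate (hv : IsStripTest a b v) (c : ℝ) :
    IsStripTest (a + c) (b + c) fun x => v (x - (c, 0)) where
  contDiff := hv.contDiff.comp (contDiff_id.sub contDiff_const)
  hasCompactSupport := hv.hasCompactSupport.comp_homeomorph (Homeomorph.subRight ((c, 0) : ℝ × ℝ))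
  tsupport_subset x hx := by
    have mem_tsupport := hv.tsupport_subset <|
      tsupport_comp_subset_preimage v (continuous_sub_right ((c, 0) : ℝ × ℝ)) hx
    simp only [Set.mem_prod, Set.mem_Ioo, mem_univ, and_true, Prod.fst_sub] at mem_tsupport ⊢
    constructor <;> linarith [mem_tsupport.1, mem_tsupport.2]

lemma add {c : ℝ} {w : ℝ × ℝ → ℂ} (hv : IsStripTest a b v) (hw : IsStripTest b c w) (hab : a ≤ b)
    (hbc : b ≤ c) : IsStripTest a c (v + w) where
  contDiff := hv.contDiff.add hw.contDiff
  hasCompactSupport := hv.hasCompactSupport.add hw.hasCompactSupport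
  tsupport_subset := (tsupport_add v w).trans <| union_subset
    (hv.tsupport_subset.trans (prod_mono_left (Ioo_subset_Ioo_right hbc)))
    (hw.tsupport_subset.trans (prod_mono_left (Ioo_subset_Ioo_left hab)))

lemma planeEnergy_add {c : ℝ} {w : ℝ × ℝ → ℂ} (hv : IsStripTest a b v) (hw : IsStripTest b c w)
    (L : ℝ) : planeEnergy L (v + w) = planeEnergy L v + planeEnergy L w := by
  rw [planeEnergy, planeEnergy, planeEnergy,
    ← integral_add (integrable_stripDensity L hv.contDiff hv.hasCompactSupport)
      (integrable_stripDensity L hw.contDiff hw.hasCompactSupport)]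
  congr with x
  by_cases hx : x ∈ tsupport v
  · have hxw : x ∉ tsupport w := fun hxw =>
      lt_asymm (hv.tsupport_subset hx).1.2 (hw.tsupport_subset hxw).1.1
    rw [stripDensity_of_notMem_tsupport L hxw, add_zero]
    refine stripDensity_congr L ?_
    filter_upwards [notMem_tsupport_iff_eventuallyEq.1 hxw] with y hy using by simp [hy]
  · rw [stripDensity_of_notMem_tsupport L hx, zero_add]
    refine stripDensity_congr L ?_
    filter_upwards [notMem_tsupport_iff_eventuallyEq.1 hx] with y hy using by simp [hy]

end IsStripTest

lemma planeEnergy_translate (L : ℝ) (v : ℝ × ℝ → ℂ) (c : ℝ) :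
    planeEnergy L (fun x => v (x - (c, 0))) = planeEnergy L v := by
  rw [planeEnergy, planeEnergy, ← integral_sub_right_eq_self (stripDensity L v) (c, 0)]
  congr with x
  simp [stripDensity, magGradSq, fderiv_comp_sub, Avan]

lemma exists_indicator_le_confined_quartic {l : ℝ} (hl : 0 < l) :
    ∃ M c : ℝ, ∀ t s : ℝ, 0 ≤ s → (Icc (-M) M).indicator (fun _ => -c) t ≤
      ((t * arctan t - 1) / 3 - l) * s + l / 2 * s ^ 2 := by
  refine ⟨2 * (1 + 3 * l), (1 / 3 + l) ^ 2 / (2 * l), fun t s hs => ?_⟩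
  by_cases ht : t ∈ Icc (-(2 * (1 + 3 * l))) (2 * (1 + 3 * l))
  · have complete_square : -((1 / 3 + l) ^ 2 / (2 * l)) + l / 2 * (s - (1 / 3 + l) / l) ^ 2 =
        -(1 / 3 + l) * s + l / 2 * s ^ 2 := by
      field_simp
      ring
    rw [indicator_of_mem ht]
    calc -((1 / 3 + l) ^ 2 / (2 * l)) ≤ -(1 / 3 + l) * s + l / 2 * s ^ 2 := by
          rw [← complete_square, le_add_iff_nonneg_right]
          positivity
      _ ≤ _ := by
          gcongr
          linarith [mul_arctan_nonneg t]
  · rw [indicator_of_notMem ht]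
    have ht' : 2 * (1 + 3 * l) < |t| := not_le.1 (mt abs_le.1 ht)
    have coefficient_nonneg : 0 ≤ (t * arctan t - 1) / 3 - l := by
      linarith [half_abs_le_mul_arctan (t := t) (by linarith)]
    positivity

lemma integral_confined_quartic_le_planeEnergy (L : ℝ) {v : ℝ × ℝ → ℂ} (hv : ContDiff ℝ 1 v)
    (hvs : HasCompactSupport v) :
    ∫ x : ℝ × ℝ, (((x.2 * arctan x.2 - 1) / 3 - L ^ (-(2 : ℝ) / 3)) * ‖v x‖ ^ 2
      + L ^ (-(2 : ℝ) / 3) / 2 * ‖v x‖ ^ 4) ≤ planeEnergy L v := by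
  have hvc := hv.continuous
  have hD := integrable_stripDensity L hv hvs
  have hG := integrable_magGradSq contDiff_Avan.continuous hv hvs
  have hS : Integrable fun x => ‖v x‖ ^ 2 := integrable_norm_pow hvc hvs two_ne_zero
  have hT : Integrable fun x : ℝ × ℝ => x.2 * arctan x.2 * ‖v x‖ ^ 2 :=
    integrable_mul_norm_pow (by fun_prop) hvc hvs two_ne_zero
  have hGS : Integrable fun x => 3 * magGradSq Avan v x + ‖v x‖ ^ 2 := (hG.const_mul 3).add hS
  have split : ∫ x : ℝ × ℝ, (((x.2 * arctan x.2 - 1) / 3 - L ^ (-(2 : ℝ) / 3)) * ‖v x‖ ^ 2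
      + L ^ (-(2 : ℝ) / 3) / 2 * ‖v x‖ ^ 4) =
        planeEnergy L v - 1 / 3 * ((∫ x, (3 * magGradSq Avan v x + ‖v x‖ ^ 2))
          - ∫ x : ℝ × ℝ, x.2 * arctan x.2 * ‖v x‖ ^ 2) := by
    rw [planeEnergy, ← integral_sub hGS hT, ← integral_const_mul,
      ← integral_sub hD (by exact (hGS.sub hT).const_mul (1 / 3))]
    congr with x
    simp only [stripDensity]
    ring
  linarith [integral_mul_arctan_mul_norm_sq_le hv hvs]

lemma exists_le_planeEnergy {L : ℝ} (hL : 0 < L) (a b : ℝ) :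
    ∃ C, ∀ v, IsStripTest a b v → C ≤ planeEnergy L v := by
  obtain ⟨M, c, hMc⟩ := exists_indicator_le_confined_quartic (rpow_pos_of_pos hL (-(2 : ℝ) / 3))
  refine ⟨∫ x, (Icc a b ×ˢ Icc (-M) M).indicator (fun _ => -c) x, fun v hv => ?_⟩
  have hvc := hv.contDiff.continuous
  refine le_trans (integral_mono ?_ ?_ fun x => ?_)
    (integral_confined_quartic_le_planeEnergy L hv.contDiff hv.hasCompactSupport)
  · exact (integrable_indicator_iff (measurableSet_Icc.prod measurableSet_Icc)).2 <|
      integrableOn_const (isCompact_Icc.prod isCompact_Icc).measure_ne_top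
  · exact (integrable_mul_norm_pow (by fun_prop) hvc hv.hasCompactSupport two_ne_zero).add
      ((integrable_norm_pow hvc hv.hasCompactSupport four_ne_zero).const_mul _)
  · by_cases hx : x.1 ∈ Icc a b
    · have drop_fst : (Icc a b ×ˢ Icc (-M) M).indicator (fun _ => -c) x =
          (Icc (-M) M).indicator (fun _ => -c) x.2 := by
        simp only [indicator_apply, Set.mem_prod, hx, true_and]
      rw [drop_fst, show 4 = 2 * 2 from rfl, pow_mul]
      exact hMc x.2 (‖v x‖ ^ 2) (sq_nonneg _)
    · have hvx : v x = 0 := image_eq_zero_of_notMem_tsupport fun h =>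
        hx (Ioo_subset_Icc_self (hv.tsupport_subset h).1)
      rw [indicator_of_notMem fun h => hx h.1]
      simp [hvx]

/-! ### Radial and vertical truncation -/

lemma abs_smoothTransition_le_one (t : ℝ) : |smoothTransition t| ≤ 1 :=
  (abs_of_nonneg (smoothTransition.nonneg t)).trans_le (smoothTransition.le_one t)

section RadialTrunc

variable {F : Type*} [NormedAddCommGroup F] [InnerProductSpace ℝ F]

/-- A `C¹` truncation that kills the vectors of norm at most `1 / r` and fixes those of norm at
least `2 / r`; composing with it moves the support of a function away from its zero set. -/
def radialTrunc (r : ℝ) (z : F) : F := smoothTransition ((r * ‖z‖) ^ 2 - 1) • z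

lemma norm_radialTrunc_le (r : ℝ) (z : F) : ‖radialTrunc r z‖ ≤ ‖z‖ := by
  rw [radialTrunc, norm_smul]
  exact mul_le_of_le_one_left (norm_nonneg z) (abs_smoothTransition_le_one _)

lemma radialTrunc_eq_zero {r : ℝ} (hr : 0 ≤ r) {z : F} (hz : r * ‖z‖ ≤ 1) :
    radialTrunc r z = 0 := by
  have : (r * ‖z‖) ^ 2 ≤ 1 := pow_le_one₀ (by positivity) hz
  rw [radialTrunc, smoothTransition.zero_of_nonpos (by linarith), zero_smul]

lemma radialTrunc_eq_self {r : ℝ} {z : F} (hz : 2 ≤ r * ‖z‖) : radialTrunc r z = z := by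
  rw [radialTrunc, smoothTransition.one_of_one_le (by nlinarith), one_smul]

lemma radialTrunc_eq_inv_smul {r : ℝ} (hr : 0 < r) (z : F) :
    radialTrunc r z = r⁻¹ • radialTrunc 1 (r • z) := by
  rw [radialTrunc, radialTrunc, norm_smul, norm_of_nonneg hr.le, smul_comm, inv_smul_smul₀ hr.ne',
    one_mul]

lemma contDiff_radialTrunc (r : ℝ) : ContDiff ℝ 1 (radialTrunc r : F → F) := by
  refine (smoothTransition.contDiff.comp ?_).smul contDiff_id
  simp only [mul_pow]
  exact (contDiff_const.mul (contDiff_norm_sq ℝ)).sub contDiff_const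

lemma fderiv_radialTrunc_of_inner_eq_zero (r : ℝ) {z w : F} (hzw : inner ℝ z w = 0) :
    fderiv ℝ (radialTrunc r) z w = smoothTransition ((r * ‖z‖) ^ 2 - 1) • w := by
  have hnorm : HasFDerivAt (fun y : F => (r * ‖y‖) ^ 2 - 1) (r ^ 2 • 2 • innerSL ℝ z) z := by
    simp only [mul_pow]
    exact ((hasFDerivAt_id z).norm_sq.const_mul (r ^ 2)).sub_const 1
  have hst := (smoothTransition.contDiff (n := 1)).differentiable one_ne_zero
    ((r * ‖z‖) ^ 2 - 1) |>.hasDerivAt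
  have h := (hst.comp_hasFDerivAt z hnorm).smul (hasFDerivAt_id z)
  change fderiv ℝ ((smoothTransition ∘ fun y : F => (r * ‖y‖) ^ 2 - 1) • id) z w = _
  simp [h.fderiv, hzw]

lemma exists_norm_fderiv_radialTrunc_le (F : Type*) [NormedAddCommGroup F] [InnerProductSpace ℝ F]
    [FiniteDimensional ℝ F] :
    ∃ C, ∀ r > 0, ∀ z : F, ‖fderiv ℝ (radialTrunc r) z‖ ≤ C := by
  have hdiff : ContDiff ℝ 1 fun z : F => radialTrunc 1 z - z :=
    (contDiff_radialTrunc 1).sub contDiff_id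
  have hsupp : HasCompactSupport fun z : F => radialTrunc 1 z - z :=
    HasCompactSupport.intro (isCompact_closedBall 0 2) fun z hz => by
      rw [mem_closedBall_zero_iff, not_le] at hz
      rw [radialTrunc_eq_self (by linarith), sub_self]
  obtain ⟨D, hD⟩ := hdiff.lipschitzWith_of_hasCompactSupport hsupp one_ne_zero
  have lipschitz_one : LipschitzWith (D + 1) (radialTrunc 1 : F → F) := by
    simpa using hD.add LipschitzWith.id
  refine ⟨↑(D + 1), fun r hr z => ?_⟩
  rw [funext (radialTrunc_eq_inv_smul hr), fderiv_fun_const_smul, fderiv_comp_smul,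
    inv_smul_smul₀ hr.ne']
  · exact norm_fderiv_le_of_lipschitz ℝ lipschitz_one
  · exact ((contDiff_radialTrunc 1).comp (contDiff_const_smul r)).differentiable one_ne_zero z

end RadialTrunc

/-- A `C¹` cutoff in the vertical direction, equal to `1` for `|x₂| ≤ r` and to `0` for
`|x₂| ≥ 2r`. -/
def verticalCutoff (r : ℝ) (x : ℝ × ℝ) : ℝ := smoothTransition (2 - (x.2 / r) ^ 2)

lemma contDiff_verticalCutoff (r : ℝ) : ContDiff ℝ 1 (verticalCutoff r) :=
  smoothTransition.contDiff.comp (contDiff_const.sub ((contDiff_snd.div_const r).pow 2))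

lemma abs_verticalCutoff_le_one (r : ℝ) (x : ℝ × ℝ) : |verticalCutoff r x| ≤ 1 :=
  abs_smoothTransition_le_one _

lemma verticalCutoff_eq_one {r : ℝ} {x : ℝ × ℝ} (hr : 0 < r) (hx : |x.2| ≤ r) :
    verticalCutoff r x = 1 := by
  refine smoothTransition.one_of_one_le ?_
  have : (x.2 / r) ^ 2 ≤ 1 := by
    rwa [sq_le_one_iff_abs_le_one, abs_div, abs_of_pos hr, div_le_one hr]
  linarith

lemma verticalCutoff_eq_zero {r : ℝ} {x : ℝ × ℝ} (hr : 0 < r) (hx : 2 * r ≤ |x.2|) :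
    verticalCutoff r x = 0 := by
  refine smoothTransition.zero_of_nonpos ?_
  have : 2 ≤ |x.2 / r| := by rwa [abs_div, abs_of_pos hr, le_div_iff₀ hr]
  nlinarith [sq_abs (x.2 / r)]

lemma exists_norm_fderiv_verticalCutoff_le :
    ∃ C, ∀ r ≥ 1, ∀ x, ‖fderiv ℝ (verticalCutoff r) x‖ ≤ C := by
  have hdiff : ContDiff ℝ 1 fun t : ℝ => smoothTransition (2 - t ^ 2) :=
    smoothTransition.contDiff.comp (contDiff_const.sub (contDiff_id.pow 2))
  have hsupp : HasCompactSupport fun t : ℝ => smoothTransition (2 - t ^ 2) :=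
    HasCompactSupport.intro (isCompact_Icc (a := -2) (b := 2)) fun t ht =>
      smoothTransition.zero_of_nonpos <| by
        nlinarith [sq_abs t, not_le.1 (mt abs_le.1 ht)]
  obtain ⟨C, hC⟩ := hdiff.lipschitzWith_of_hasCompactSupport hsupp one_ne_zero
  refine ⟨C, fun r hr x => norm_fderiv_le_of_lipschitz ℝ ?_⟩
  have lipschitz_scaling : LipschitzWith 1 fun y : ℝ × ℝ => y.2 / r := by
    refine LipschitzWith.of_dist_le_mul fun y z => ?_
    rw [Real.dist_eq, ← sub_div, abs_div, abs_of_pos (show 0 < r by linarith), NNReal.coe_one,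
      one_mul]
    exact (div_le_self (abs_nonneg _) hr).trans (le_max_right _ _)
  have h := hC.comp lipschitz_scaling
  rwa [mul_one] at h

section MagneticBounds

variable (A : ℝ × ℝ → ℝ × ℝ) {φ : ℝ × ℝ → ℝ} {u : ℝ × ℝ → ℂ} {x : ℝ × ℝ}

lemma fderiv_smul_sub_eq (hφ : DifferentiableAt ℝ φ x) (hu : DifferentiableAt ℝ u x)
    (v : ℝ × ℝ) (α : ℂ) :
    fderiv ℝ (φ • u) x v - α * (φ • u) x =
      φ x • (fderiv ℝ u x v - α * u x) + fderiv ℝ φ x v • u x := by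
  rw [fderiv_smul hφ hu]
  simp only [add_apply, smul_apply, Complex.real_smul, ContinuousLinearMap.smulRight_apply,
    Pi.smul_apply']
  ring

lemma magGradSq_smul_le {C : ℝ} (hφ : DifferentiableAt ℝ φ x) (hu : DifferentiableAt ℝ u x)
    (hφ_le : |φ x| ≤ 1) (hC : ‖fderiv ℝ φ x‖ ≤ C) :
    magGradSq A (φ • u) x ≤ 2 * magGradSq A u x + 4 * C ^ 2 * ‖u x‖ ^ 2 := by
  have component (v : ℝ × ℝ) (hv : ‖v‖ = 1) (α : ℂ) :
      ‖fderiv ℝ (φ • u) x v - α * (φ • u) x‖ ^ 2 ≤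
        2 * ‖fderiv ℝ u x v - α * u x‖ ^ 2 + 2 * C ^ 2 * ‖u x‖ ^ 2 := by
    have hv_le : ‖fderiv ℝ φ x v‖ ≤ C := by
      exact ((fderiv ℝ φ x).le_opNorm v).trans (by rwa [hv, mul_one])
    calc ‖fderiv ℝ (φ • u) x v - α * (φ • u) x‖ ^ 2
        ≤ (1 * ‖fderiv ℝ u x v - α * u x‖ + C * ‖u x‖) ^ 2 := by
          rw [fderiv_smul_sub_eq hφ hu]
          refine pow_le_pow_left₀ (norm_nonneg _) ((norm_add_le _ _).trans ?_) 2
          rw [norm_smul, norm_smul]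
          gcongr
          exact hφ_le
      _ ≤ 2 * ((1 * ‖fderiv ℝ u x v - α * u x‖) ^ 2 + (C * ‖u x‖) ^ 2) := add_sq_le
      _ = 2 * ‖fderiv ℝ u x v - α * u x‖ ^ 2 + 2 * C ^ 2 * ‖u x‖ ^ 2 := by ring
  have h₁ := component (1, 0) (by simp [Prod.norm_def]) (Complex.I * (A x).1)
  have h₂ := component (0, 1) (by simp [Prod.norm_def]) (Complex.I * (A x).2)
  unfold magGradSq
  linarith

-- Gauge covariance: `radialTrunc r` commutes with phase rotations.
lemma fderiv_radialTrunc_comp_sub_eq (hu : DifferentiableAt ℝ u x) (r a : ℝ) (v : ℝ × ℝ) :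
    fderiv ℝ (radialTrunc r ∘ u) x v - Complex.I * a * (radialTrunc r ∘ u) x =
      fderiv ℝ (radialTrunc r) (u x) (fderiv ℝ u x v - Complex.I * a * u x) := by
  have rotation_orthogonal : inner ℝ (u x) (Complex.I * a * u x) = 0 := by
    simp only [Complex.inner, Complex.mul_re, Complex.mul_im, Complex.I_re, Complex.I_im,
      Complex.ofReal_re, Complex.ofReal_im, Complex.conj_re, Complex.conj_im]
    ring
  rw [fderiv_comp x ((contDiff_radialTrunc r).differentiable one_ne_zero _) hu, map_sub,
    fderiv_radialTrunc_of_inner_eq_zero r rotation_orthogonal, Function.comp_apply, radialTrunc,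
    mul_smul_comm]
  rfl

lemma magGradSq_radialTrunc_comp_le {C r : ℝ} (hu : DifferentiableAt ℝ u x)
    (hC : ‖fderiv ℝ (radialTrunc r) (u x)‖ ≤ C) :
    magGradSq A (radialTrunc r ∘ u) x ≤ C ^ 2 * magGradSq A u x := by
  have component (z : ℂ) : ‖fderiv ℝ (radialTrunc r) (u x) z‖ ^ 2 ≤ C ^ 2 * ‖z‖ ^ 2 := by
    rw [← mul_pow]
    gcongr
    exact ((fderiv ℝ (radialTrunc r) (u x)).le_opNorm z).trans (by gcongr)
  simp only [magGradSq, fderiv_radialTrunc_comp_sub_eq hu, mul_add]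
  exact add_le_add (component _) (component _)

end MagneticBounds

lemma contDiff_indicator_of_tsupport_subset {E F : Type*} [NormedAddCommGroup E] [NormedSpace ℝ E]
    [NormedAddCommGroup F] [NormedSpace ℝ F] {n : WithTop ℕ∞} {S : Set E} {f : E → F}
    (hS : IsOpen S) (hf : ContDiff ℝ n f) (hsupp : tsupport (S.indicator f) ⊆ S) :
    ContDiff ℝ n (S.indicator f) :=
  contMDiff_iff_contDiff.1 <| contMDiff_of_tsupport fun _ hx =>
    (hf.contDiffAt.congr_of_eventuallyEq <|
      (eqOn_indicator (s := S)).eventuallyEq_of_mem (hS.mem_nhds (hsupp hx))).contMDiffAt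

/-! ### Density of the test functions in energy -/

/-- A compactly supported modification of `u` that also vanishes near the zeros of `u` and agrees
with `u` on `{|x₂| ≤ r, 2 ≤ r |u|}`. -/
def truncate (r : ℝ) (u : ℝ × ℝ → ℂ) : ℝ × ℝ → ℂ := verticalCutoff r • (radialTrunc r ∘ u)

section Truncate

variable {r : ℝ} {u : ℝ × ℝ → ℂ} {x : ℝ × ℝ}

lemma contDiff_truncate (r : ℝ) (hu : ContDiff ℝ 1 u) : ContDiff ℝ 1 (truncate r u) :=
  (contDiff_verticalCutoff r).smul ((contDiff_radialTrunc r).comp hu)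

lemma norm_truncate_le (r : ℝ) (u : ℝ × ℝ → ℂ) (x : ℝ × ℝ) : ‖truncate r u x‖ ≤ ‖u x‖ := by
  rw [truncate, Pi.smul_apply', norm_smul]
  exact (mul_le_of_le_one_left (norm_nonneg _) (abs_verticalCutoff_le_one r x)).trans
    (norm_radialTrunc_le r (u x))

lemma truncate_eq_self (hr : 0 < r) (hx : |x.2| ≤ r) (hux : 2 ≤ r * ‖u x‖) :
    truncate r u x = u x := by
  rw [truncate, Pi.smul_apply', verticalCutoff_eq_one hr hx, one_smul, Function.comp_apply,
    radialTrunc_eq_self hux]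

lemma truncate_eq_zero (hr : 0 < r) (hx : 2 * r ≤ |x.2| ∨ r * ‖u x‖ ≤ 1) :
    truncate r u x = 0 := by
  rw [truncate, Pi.smul_apply', Function.comp_apply]
  rcases hx with hx | hx
  · rw [verticalCutoff_eq_zero hr hx, zero_smul]
  · rw [radialTrunc_eq_zero hr.le hx, smul_zero]

lemma exists_magGradSq_truncate_le (A : ℝ × ℝ → ℝ × ℝ) (hu : ContDiff ℝ 1 u) :
    ∃ C, ∀ r ≥ 1, ∀ x, magGradSq A (truncate r u) x ≤ C * (magGradSq A u x + ‖u x‖ ^ 2) := by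
  obtain ⟨C₁, hC₁⟩ := exists_norm_fderiv_radialTrunc_le ℂ
  obtain ⟨C₂, hC₂⟩ := exists_norm_fderiv_verticalCutoff_le
  refine ⟨2 * C₁ ^ 2 + 4 * C₂ ^ 2, fun r hr x => ?_⟩
  have hux := hu.differentiable one_ne_zero x
  have radial := magGradSq_radialTrunc_comp_le A hux (hC₁ r (by linarith) (u x))
  have vertical := magGradSq_smul_le A ((contDiff_verticalCutoff r).differentiable one_ne_zero x)
    (((contDiff_radialTrunc r).comp hu).differentiable one_ne_zero x)
    (abs_verticalCutoff_le_one r x) (hC₂ r hr x)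
  calc magGradSq A (truncate r u) x
      ≤ 2 * magGradSq A (radialTrunc r ∘ u) x + 4 * C₂ ^ 2 * ‖radialTrunc r (u x)‖ ^ 2 := vertical
    _ ≤ 2 * (C₁ ^ 2 * magGradSq A u x) + 4 * C₂ ^ 2 * ‖u x‖ ^ 2 := by
        gcongr
        exact norm_radialTrunc_le r (u x)
    _ ≤ (2 * C₁ ^ 2 + 4 * C₂ ^ 2) * (magGradSq A u x + ‖u x‖ ^ 2) := by
        have h₁ : 0 ≤ C₁ ^ 2 * ‖u x‖ ^ 2 := by positivity
        have h₂ : 0 ≤ C₂ ^ 2 * magGradSq A u x := mul_nonneg (sq_nonneg _) (magGradSq_nonneg A u x)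
        linarith

lemma truncate_eventuallyEq_zero (hu : ContinuousAt u x) (hr : 0 < r) (hux : u x = 0) :
    truncate r u =ᶠ[𝓝 x] 0 := by
  have small : ∀ᶠ y in 𝓝 x, r * ‖u y‖ < 1 :=
    (hu.norm.const_mul r).eventually_lt_const (by simp [hux])
  filter_upwards [small] with y hy using truncate_eq_zero hr (Or.inr hy.le)

lemma eventually_truncate_eventuallyEq_self (hu : ContinuousAt u x) (hux : u x ≠ 0) :
    ∀ᶠ r in atTop, truncate r u =ᶠ[𝓝 x] u := by
  have norm_pos : 0 < ‖u x‖ := norm_pos_iff.2 hux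
  filter_upwards [eventually_gt_atTop 0, eventually_gt_atTop |x.2|,
    eventually_gt_atTop (2 / ‖u x‖)] with r hr hr_height hr_norm
  rw [div_lt_iff₀ norm_pos] at hr_norm
  filter_upwards [continuous_snd.abs.continuousAt.eventually_lt_const hr_height,
    (hu.norm.const_mul r).eventually_const_lt hr_norm] with y hy_height hy_norm
  exact truncate_eq_self hr hy_height.le hy_norm.le

end Truncate

lemma norm_stripDensity_le (L : ℝ) (u : ℝ × ℝ → ℂ) (x : ℝ × ℝ) :
    ‖stripDensity L u x‖ ≤ magGradSq Avan u x + |L ^ (-(2 : ℝ) / 3)| * ‖u x‖ ^ 2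
      + |L ^ (-(2 : ℝ) / 3) / 2| * ‖u x‖ ^ 4 := by
  refine (norm_add_le _ _).trans (add_le_add ((norm_sub_le _ _).trans ?_) ?_)
  · rw [norm_mul, norm_pow, norm_norm, norm_of_nonneg (magGradSq_nonneg Avan u x)]
    rfl
  · rw [norm_mul, norm_pow, norm_norm]
    rfl

lemma tendsto_stripDensity_truncate (L : ℝ) {u : ℝ × ℝ → ℂ} (hu : Continuous u) (x : ℝ × ℝ) :
    Tendsto (fun r => stripDensity L (truncate r u) x) atTop
      (𝓝 ((Function.support u).indicator (stripDensity L u) x)) := by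
  refine tendsto_const_nhds.congr' ?_
  by_cases hux : u x = 0
  · filter_upwards [eventually_gt_atTop 0] with r hr
    rw [indicator_of_notMem (Function.notMem_support.2 hux),
      stripDensity_congr L (truncate_eventuallyEq_zero hu.continuousAt hr hux),
      stripDensity_of_notMem_tsupport L (by simp [tsupport])]
  · filter_upwards [eventually_truncate_eventuallyEq_self hu.continuousAt hux] with r hr
    rw [indicator_of_mem (Function.mem_support.2 hux), stripDensity_congr L hr]

lemma tendsto_Estrip_truncate (L : ℝ) {R : ℝ} {u : ℝ × ℝ → ℂ} (hu : MemH1mag0 R u) :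
    Tendsto (fun r => Estrip L R (truncate r u)) atTop
      (𝓝 (∫ x in Strip R, (Function.support u).indicator (stripDensity L u) x)) := by
  obtain ⟨hu_smooth, hu_sq, hu_grad, hu_four, -⟩ := hu
  obtain ⟨C, hC⟩ := exists_magGradSq_truncate_le Avan hu_smooth
  refine tendsto_integral_filter_of_dominated_convergence
    (fun x => C * (magGradSq Avan u x + ‖u x‖ ^ 2) + |L ^ (-(2 : ℝ) / 3)| * ‖u x‖ ^ 2
      + |L ^ (-(2 : ℝ) / 3) / 2| * ‖u x‖ ^ 4)
    (.of_forall fun r =>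
      (continuous_stripDensity L (contDiff_truncate r hu_smooth)).aestronglyMeasurable) ?_
    ((((hu_grad.add hu_sq).const_mul C).add (hu_sq.const_mul _)).add (hu_four.const_mul _))
    (.of_forall fun x => tendsto_stripDensity_truncate L hu_smooth.continuous x)
  filter_upwards [eventually_ge_atTop 1] with r hr
  refine .of_forall fun x => (norm_stripDensity_le L _ x).trans ?_
  gcongr
  · exact hC r hr x
  · exact norm_truncate_le r u x
  · exact norm_truncate_le r u x

lemma integral_indicator_support_stripDensity_le (L : ℝ) {R : ℝ} {u : ℝ × ℝ → ℂ}
    (hu : MemH1mag0 R u) :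
    ∫ x in Strip R, (Function.support u).indicator (stripDensity L u) x ≤ Estrip L R u := by
  obtain ⟨hu_smooth, hu_sq, hu_grad, hu_four, -⟩ := hu
  have hD : IntegrableOn (stripDensity L u) (Strip R) :=
    (hu_grad.sub (hu_sq.const_mul _)).add (hu_four.const_mul _)
  refine integral_mono
    (hD.integrable.indicator hu_smooth.continuous.isOpen_support.measurableSet) hD fun x => ?_
  refine indicator_le_self' (fun y hy => ?_) x
  rw [stripDensity, Function.notMem_support.1 hy]
  simpa using magGradSq_nonneg Avan u y

lemma closure_Strip_subset (R : ℝ) : closure (Strip R) ⊆ Icc (-R / 2) (R / 2) ×ˢ univ :=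
  closure_minimal (prod_mono_left Ioo_subset_Icc_self) (isClosed_Icc.prod isClosed_univ)

lemma isStripTest_indicator_truncate {R r : ℝ} (hr : 0 < r) {u : ℝ × ℝ → ℂ}
    (hu : ContDiff ℝ 1 u) (hu_frontier : ∀ x ∈ frontier (Strip R), u x = 0) :
    IsStripTest (-R / 2) (R / 2) ((Strip R).indicator (truncate r u)) := by
  let K : Set (ℝ × ℝ) := closure (Strip R) ∩ ({x | |x.2| ≤ 2 * r} ∩ {x | 1 ≤ r * ‖u x‖})
  have isClosed_K : IsClosed K := isClosed_closure.inter
    ((isClosed_le continuous_snd.abs continuous_const).inter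
      (isClosed_le continuous_const (continuous_const.mul hu.continuous.norm)))
  have isCompact_K : IsCompact K := by
    refine (isCompact_Icc.prod (isCompact_Icc (a := -(2 * r)) (b := 2 * r))).of_isClosed_subset
      isClosed_K fun x hx => ⟨(closure_Strip_subset R hx.1).1, abs_le.1 hx.2.1⟩
  have K_subset : K ⊆ Strip R := fun x hx => by
    by_contra hxS
    have hux : u x = 0 := hu_frontier x ⟨hx.1, by rwa [(isOpen_Strip R).interior_eq]⟩
    have one_le : 1 ≤ r * ‖u x‖ := hx.2.2
    rw [hux, norm_zero, mul_zero] at one_le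
    exact one_le.not_gt one_pos
  have support_subset : Function.support ((Strip R).indicator (truncate r u)) ⊆ K := by
    rw [support_indicator]
    refine fun x ⟨hxS, hx⟩ => ⟨subset_closure hxS, ?_, ?_⟩
    · exact le_of_not_ge fun h => hx (truncate_eq_zero hr (Or.inl h))
    · exact le_of_not_ge fun h => hx (truncate_eq_zero hr (Or.inr h))
  have tsupport_subset := closure_minimal support_subset isClosed_K
  exact ⟨contDiff_indicator_of_tsupport_subset (isOpen_Strip R) (contDiff_truncate r hu)
      (tsupport_subset.trans K_subset),
    isCompact_K.of_isClosed_subset (isClosed_tsupport _) tsupport_subset,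
    tsupport_subset.trans K_subset⟩

lemma Estrip_indicator (L R : ℝ) (u : ℝ × ℝ → ℂ) :
    Estrip L R ((Strip R).indicator u) = Estrip L R u :=
  setIntegral_congr_fun (isOpen_Strip R).measurableSet fun _ hx => stripDensity_congr L <|
    eqOn_indicator.eventuallyEq_of_mem ((isOpen_Strip R).mem_nhds hx)

lemma MemH1mag0.exists_isStripTest_planeEnergy_lt {L R c : ℝ} {u : ℝ × ℝ → ℂ}
    (hu : MemH1mag0 R u) (hc : Estrip L R u < c) :
    ∃ v, IsStripTest (-R / 2) (R / 2) v ∧ planeEnergy L v < c := by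
  have limit_lt := (integral_indicator_support_stripDensity_le L hu).trans_lt hc
  obtain ⟨r, hlt, hr⟩ := (((tendsto_Estrip_truncate L hu).eventually_lt_const limit_lt).and
    (eventually_gt_atTop 0)).exists
  have test := isStripTest_indicator_truncate hr hu.1 hu.2.2.2.2
  exact ⟨_, test, by rwa [← test.Estrip_eq_planeEnergy, Estrip_indicator]⟩

/-! ### Subadditivity of the ground-state energy -/

lemma bddBelow_image_Estrip {L : ℝ} (hL : 0 < L) (R : ℝ) :
    BddBelow (Estrip L R '' {u | MemH1mag0 R u}) := by
  obtain ⟨C, hC⟩ := exists_le_planeEnergy hL (-R / 2) (R / 2)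
  refine ⟨C, forall_mem_image.2 fun u hu => le_of_forall_gt fun c hc => ?_⟩
  obtain ⟨v, hv, hvc⟩ := hu.exists_isStripTest_planeEnergy_lt hc
  exact (hC v hv).trans_lt hvc

lemma IsStripTest.egs_le_planeEnergy {L R : ℝ} {v : ℝ × ℝ → ℂ}
    (hv : IsStripTest (-R / 2) (R / 2) v) (hL : 0 < L) : egs L R ≤ planeEnergy L v :=
  csInf_le (bddBelow_image_Estrip hL R) ⟨v, hv.memH1mag0, hv.Estrip_eq_planeEnergy L⟩

lemma IsStripTest.zero (a b : ℝ) : IsStripTest a b 0 where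
  contDiff := contDiff_const
  hasCompactSupport := .zero
  tsupport_subset := by simp [tsupport]

lemma exists_isStripTest_planeEnergy_lt_of_egs_lt {L R c : ℝ} (hc : egs L R < c) :
    ∃ v, IsStripTest (-R / 2) (R / 2) v ∧ planeEnergy L v < c := by
  obtain ⟨-, ⟨u, hu, rfl⟩, huc⟩ :=
    exists_lt_of_csInf_lt (Set.Nonempty.image _ ⟨0, (IsStripTest.zero _ _).memH1mag0⟩) hc
  exact MemH1mag0.exists_isStripTest_planeEnergy_lt hu huc

lemma egs_nonpos {L : ℝ} (hL : 0 < L) (R : ℝ) : egs L R ≤ 0 := by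
  refine ((IsStripTest.zero _ _).egs_le_planeEnergy hL).trans_eq ?_
  rw [planeEnergy, funext fun x => stripDensity_of_notMem_tsupport L (x := x) (by simp [tsupport]),
    integral_zero]

lemma egs_add_le {L R R' : ℝ} (hL : 0 < L) (hR : 0 ≤ R) (hR' : 0 ≤ R') :
    egs L (R + R') ≤ egs L R + egs L R' := by
  refine le_of_forall_pos_lt_add fun ε hε => ?_
  obtain ⟨v, hv, hv_lt⟩ :=
    exists_isStripTest_planeEnergy_lt_of_egs_lt (lt_add_of_pos_right (egs L R) (half_pos hε))
  obtain ⟨w, hw, hw_lt⟩ :=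
    exists_isStripTest_planeEnergy_lt_of_egs_lt (lt_add_of_pos_right (egs L R') (half_pos hε))
  have hv_left : IsStripTest (-(R + R') / 2) (R / 2 - R' / 2) fun x => v (x - (-R' / 2, 0)) := by
    convert hv.translate (-R' / 2) using 1 <;> ring
  have hw_right : IsStripTest (R / 2 - R' / 2) ((R + R') / 2) fun x => w (x - (R / 2, 0)) := by
    convert hw.translate (R / 2) using 1 <;> ring
  have glued := hv_left.add hw_right (by linarith) (by linarith)
  calc egs L (R + R') ≤ planeEnergy L v + planeEnergy L w := by
        rw [← planeEnergy_translate L v (-R' / 2), ← planeEnergy_translate L w (R / 2),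
          ← hv_left.planeEnergy_add hw_right]
        exact glued.egs_le_planeEnergy hL
    _ < egs L R + egs L R' + ε := by linarith

lemma egs_nat_mul_le {L R : ℝ} (hL : 0 < L) (hR : 0 ≤ R) (n : ℕ) :
    egs L (n * R) ≤ n * egs L R := by
  induction n with
  | zero => simpa using egs_nonpos hL 0
  | succ n ih =>
    rw [Nat.cast_succ, add_one_mul, add_one_mul]
    exact (egs_add_le hL (by positivity) hR).trans (by gcongr)

/-- `E(L) ≤ e_gs(L;R)/R` for all `L > 0`, `R > 0`. -/
theorem E_le_egs_div (E : ℝ → ℝ) (hE : IsLimitE E) :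
    ∀ L : ℝ, 0 < L → ∀ R : ℝ, 0 < R → E L ≤ egs L R / R := by
  intro L hL R hR
  have tendsto_multiples : Tendsto (fun n : ℕ => egs L (n * R) / (n * R)) atTop (𝓝 (E L)) :=
    (hE L hL).comp (tendsto_natCast_atTop_atTop.atTop_mul_const hR)
  refine le_of_tendsto tendsto_multiples ?_
  filter_upwards [eventually_gt_atTop 0] with n hn
  have hn' : (0 : ℝ) < n := Nat.cast_pos.2 hn
  calc egs L (n * R) / (n * R) ≤ n * egs L R / (n * R) := by
        gcongr
        exact egs_nat_mul_le hL hR.le n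
    _ = egs L R / R := mul_div_mul_left _ _ hn'.ne'

end
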